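/- arXiv:1901.01458 — 2 statements merged into one kernel-verified Lean document; each statement's English description precedes it below -/
import Mathlib

section
/- Let A ∈ ℂ^{n×n} be a Hermitian positive semidefinite matrix and let λ : {1,…,n} → ℝ be an enumeration of its eigenvalues with multiplicity arranged in descending order (λ_1 ≥ λ_2 ≥ … ≥ λ_n ≥ 0). Let d ≤ n and let V ∈ ℂ^{n×d} satisfy V^H V = I_d. Then the determinant det(I_d + V^H A V) is a real number and satisfies det(I_d + V^H A V) ≤ ∏_{i=1}^{d} (1 + λ_i). -/
open Matrix
open scoped ComplexOrder

/-!
The determinant is the product of the `1 + μ` over the eigenvalues `μ` of `Vᴴ * A * V`, and the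
Poincaré separation theorem bounds it factor by factor: the `k`-th largest eigenvalue of
`Vᴴ * A * V` is at most the `k`-th largest eigenvalue of `A`.

Separation is read off from inertia. If `Wᴴ * diagonal a * W = diagonal b`, a nonzero vector `y`
supported on the positive weights `b i` has `∑ j, a j * ‖(W *ᵥ y) j‖ ^ 2 > 0`, so `W *ᵥ y` has a
nonzero coordinate with `0 < a j`; hence there are at most as many positive `b i` as positive `a j`.
When `Wᴴ * W = 1` this applies to the weights `a j - c`, `b i - c` for every real `c`, and comparing
the numbers of weights above every threshold is the same as comparing them in descending order.
-/

section OrderStatistics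

open scoped Finset

variable {α : Type*} [LinearOrder α] {n d : ℕ}

theorem exists_perm_antitone_comp (f : Fin n → α) : ∃ τ : Equiv.Perm (Fin n), Antitone (f ∘ τ) :=
  ⟨Tuple.sort (OrderDual.toDual ∘ f), Tuple.monotone_sort (OrderDual.toDual ∘ f)⟩

theorem apply_le_apply_castLE_of_card_lt_le {a : Fin n → α} {b : Fin d → α}
    (ha : Antitone a) (hb : Antitone b) (h : ∀ c, #{i | c < b i} ≤ #{j | c < a j})
    (hdn : d ≤ n) (k : Fin d) : b k ≤ a (Fin.castLE hdn k) := by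
  by_contra! hk
  have hcard : (Fin.castLE hdn k : ℕ) < #{j | a (Fin.castLE hdn k) < a j} :=
    ((Tuple.lt_card_gt_iff_apply_gt_of_antitone hb).mpr hk).trans_le (h _)
  exact lt_irrefl _ ((Tuple.lt_card_gt_iff_apply_gt_of_antitone ha).mp hcard)

end OrderStatistics

section Compression

open scoped Finset

variable {𝕜 m n : Type*} [RCLike 𝕜] [Fintype m] [Fintype n] [DecidableEq m] [DecidableEq n]
variable {W : Matrix m n 𝕜} {a : m → ℝ} {b : n → ℝ}

theorem star_dotProduct_diagonal_mulVec_self (a : m → ℝ) (x : m → 𝕜) :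
    star x ⬝ᵥ (diagonal (fun j ↦ (a j : 𝕜)) *ᵥ x) = ((∑ j, a j * ‖x j‖ ^ 2 : ℝ) : 𝕜) := by
  push_cast
  refine Finset.sum_congr rfl fun j _ ↦ ?_
  rw [mulVec_diagonal, ← RCLike.conj_mul, Pi.star_apply, RCLike.star_def]
  ring

theorem sum_mul_norm_sq_mulVec (h : Wᴴ * diagonal (fun j ↦ (a j : 𝕜)) * W =
    diagonal (fun i ↦ (b i : 𝕜))) (y : n → 𝕜) :
    ∑ j, a j * ‖(W *ᵥ y) j‖ ^ 2 = ∑ i, b i * ‖y i‖ ^ 2 := by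
  apply RCLike.ofReal_injective (K := 𝕜)
  rw [← star_dotProduct_diagonal_mulVec_self, ← star_dotProduct_diagonal_mulVec_self, ← h,
    star_mulVec, ← dotProduct_mulVec, mulVec_mulVec, mulVec_mulVec, Matrix.mul_assoc]

theorem eq_zero_of_mulVec_eq_zero_of_pos (h : Wᴴ * diagonal (fun j ↦ (a j : 𝕜)) * W =
    diagonal (fun i ↦ (b i : 𝕜))) {y : n → 𝕜} (hy : ∀ i, b i ≤ 0 → y i = 0)
    (hWy : ∀ j, 0 < a j → (W *ᵥ y) j = 0) : y = 0 := by
  have hterm_nonneg : ∀ i ∈ Finset.univ, 0 ≤ b i * ‖y i‖ ^ 2 := fun i _ ↦ by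
    rcases le_or_gt (b i) 0 with hi | hi
    · simp [hy i hi]
    · positivity
  have hsum_nonpos : ∑ i, b i * ‖y i‖ ^ 2 ≤ 0 := by
    rw [← sum_mul_norm_sq_mulVec h]
    refine Finset.sum_nonpos fun j _ ↦ ?_
    rcases le_or_gt (a j) 0 with hj | hj
    · exact mul_nonpos_of_nonpos_of_nonneg hj (sq_nonneg _)
    · simp [hWy j hj]
  have hterm := (Finset.sum_eq_zero_iff_of_nonneg hterm_nonneg).mp
    (hsum_nonpos.antisymm (Finset.sum_nonneg hterm_nonneg))
  funext i
  rcases le_or_gt (b i) 0 with hi | hi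
  · exact hy i hi
  · simpa [hi.ne'] using hterm i (Finset.mem_univ i)

theorem card_pos_le_of_conjTranspose_mul_diagonal_mul (h : Wᴴ * diagonal (fun j ↦ (a j : 𝕜)) * W =
    diagonal (fun i ↦ (b i : 𝕜))) : #{i | 0 < b i} ≤ #{j | 0 < a j} := by
  let S : Submodule 𝕜 (n → 𝕜) := Pi.spanSubset 𝕜 {i | 0 < b i}
  let f : S →ₗ[𝕜] ({j // 0 < a j} → 𝕜) :=
    LinearMap.funLeft 𝕜 𝕜 Subtype.val ∘ₗ W.mulVecLin ∘ₗ S.subtype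
  have hf : Function.Injective f := by
    refine (injective_iff_map_eq_zero f).mpr fun y hy ↦ Subtype.ext ?_
    exact eq_zero_of_mulVec_eq_zero_of_pos h
      (fun i hi ↦ Pi.mem_spanSubset_iff.mp y.2 i hi.not_gt) fun j hj ↦ congrFun hy ⟨j, hj⟩
  have hrank := LinearMap.finrank_le_finrank_of_injective hf
  simpa [S, Pi.dim_spanSubset, Set.ncard_eq_toFinset_card', Fintype.card_subtype] using hrank

theorem card_lt_le_of_conjTranspose_mul_diagonal_mul (hW : Wᴴ * W = 1)
    (h : Wᴴ * diagonal (fun j ↦ (a j : 𝕜)) * W = diagonal (fun i ↦ (b i : 𝕜))) (c : ℝ) :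
    #{i | c < b i} ≤ #{j | c < a j} := by
  have hsub : Wᴴ * diagonal (fun j ↦ ((a j - c : ℝ) : 𝕜)) * W =
      diagonal (fun i ↦ ((b i - c : ℝ) : 𝕜)) := by
    simp only [RCLike.ofReal_sub, ← diagonal_sub, ← smul_one_eq_diagonal, Matrix.mul_sub,
      Matrix.sub_mul, Matrix.mul_smul, Matrix.smul_mul, Matrix.mul_one, h, hW]
  simpa using card_pos_le_of_conjTranspose_mul_diagonal_mul hsub

theorem card_gt_le_of_conjTranspose_mul_diagonal_mul (hW : Wᴴ * W = 1)
    (h : Wᴴ * diagonal (fun j ↦ (a j : 𝕜)) * W = diagonal (fun i ↦ (b i : 𝕜))) (c : ℝ) :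
    #{i | b i < c} ≤ #{j | a j < c} := by
  have hsub : Wᴴ * diagonal (fun j ↦ ((-a j : ℝ) : 𝕜)) * W =
      diagonal (fun i ↦ ((-b i : ℝ) : 𝕜)) := by
    simp only [RCLike.ofReal_neg, ← diagonal_neg, Matrix.mul_neg, Matrix.neg_mul, h]
  simpa using card_lt_le_of_conjTranspose_mul_diagonal_mul hW hsub (-c)

variable {A : Matrix m m 𝕜} {V : Matrix m n 𝕜}

theorem exists_isometry_diagonal_eigenvalues (hA : A.IsHermitian) (hV : Vᴴ * V = 1)
    (hB : (Vᴴ * A * V).IsHermitian) :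
    ∃ W : Matrix m n 𝕜, Wᴴ * W = 1 ∧
      Wᴴ * diagonal (fun j ↦ (hA.eigenvalues j : 𝕜)) * W =
        diagonal (fun i ↦ (hB.eigenvalues i : 𝕜)) := by
  let P : Matrix m m 𝕜 := hA.eigenvectorUnitary
  let Q : Matrix n n 𝕜 := hB.eigenvectorUnitary
  have hP : P * Pᴴ = 1 := Unitary.coe_mul_star_self hA.eigenvectorUnitary
  have hQ : Qᴴ * Q = 1 := Unitary.coe_star_mul_self hB.eigenvectorUnitary
  have hPA : A = P * diagonal (fun j ↦ (hA.eigenvalues j : 𝕜)) * Pᴴ := hA.spectral_theorem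
  have hQB : Qᴴ * (Vᴴ * A * V) * Q = diagonal (fun i ↦ (hB.eigenvalues i : 𝕜)) :=
    (Unitary.conjStarAlgAut_star_apply _ _).symm.trans hB.conjStarAlgAut_star_eigenvectorUnitary
  refine ⟨Pᴴ * V * Q, ?_, ?_⟩
  · calc (Pᴴ * V * Q)ᴴ * (Pᴴ * V * Q) = Qᴴ * (Vᴴ * (P * Pᴴ) * V) * Q := by
          simp only [conjTranspose_mul, conjTranspose_conjTranspose, Matrix.mul_assoc]
      _ = 1 := by rw [hP, Matrix.mul_one, hV, Matrix.mul_one, hQ]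
  · calc (Pᴴ * V * Q)ᴴ * diagonal (fun j ↦ (hA.eigenvalues j : 𝕜)) * (Pᴴ * V * Q)
        = Qᴴ * (Vᴴ * (P * diagonal (fun j ↦ (hA.eigenvalues j : 𝕜)) * Pᴴ) * V) * Q := by
          simp only [conjTranspose_mul, conjTranspose_conjTranspose, Matrix.mul_assoc]
      _ = diagonal (fun i ↦ (hB.eigenvalues i : 𝕜)) := by rw [← hPA, hQB]

theorem card_lt_eigenvalues_compression_le (hA : A.IsHermitian) (hV : Vᴴ * V = 1)
    (hB : (Vᴴ * A * V).IsHermitian) (c : ℝ) :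
    #{i | c < hB.eigenvalues i} ≤ #{j | c < hA.eigenvalues j} := by
  obtain ⟨W, hW, h⟩ := exists_isometry_diagonal_eigenvalues hA hV hB
  exact card_lt_le_of_conjTranspose_mul_diagonal_mul hW h c

theorem le_eigenvalues_compression (hA : A.IsHermitian) (hV : Vᴴ * V = 1)
    (hB : (Vᴴ * A * V).IsHermitian) {c : ℝ} (hc : ∀ j, c ≤ hA.eigenvalues j) (i : n) :
    c ≤ hB.eigenvalues i := by
  obtain ⟨W, hW, h⟩ := exists_isometry_diagonal_eigenvalues hA hV hB
  have hcard : #{i | hB.eigenvalues i < c} = 0 := by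
    simpa [(hc _).not_gt] using card_gt_le_of_conjTranspose_mul_diagonal_mul hW h c
  simpa using Finset.filter_eq_empty_iff.mp (Finset.card_eq_zero.mp hcard) (Finset.mem_univ i)

theorem eigenvalues_compression_le_of_antitone (hA : A.IsHermitian) (hV : Vᴴ * V = 1)
    (hB : (Vᴴ * A * V).IsHermitian) {p q : ℕ} {σ : Fin p ≃ m} (hσ : Antitone (hA.eigenvalues ∘ σ))
    {τ : Fin q ≃ n} (hτ : Antitone (hB.eigenvalues ∘ τ)) (hqp : q ≤ p) (k : Fin q) :
    hB.eigenvalues (τ k) ≤ hA.eigenvalues (σ (Fin.castLE hqp k)) := by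
  refine apply_le_apply_castLE_of_card_lt_le hσ hτ (fun c ↦ ?_) hqp k
  calc #{i | c < hB.eigenvalues (τ i)} = #{i | c < hB.eigenvalues i} :=
        Finset.card_equiv τ (by simp)
    _ ≤ #{j | c < hA.eigenvalues j} := card_lt_eigenvalues_compression_le hA hV hB c
    _ = #{j | c < hA.eigenvalues (σ j)} := (Finset.card_equiv σ (by simp)).symm

theorem det_one_add_eq_prod_eigenvalues (hA : A.IsHermitian) :
    (1 + A).det = ∏ i, (1 + (hA.eigenvalues i : 𝕜)) := by
  let U : Matrix m m 𝕜 := hA.eigenvectorUnitary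
  have hU : Uᴴ * U = 1 := Unitary.coe_star_mul_self hA.eigenvectorUnitary
  have hUA : A = U * diagonal (fun j ↦ (hA.eigenvalues j : 𝕜)) * Uᴴ := hA.spectral_theorem
  calc (1 + A).det = (1 + U * (diagonal (fun j ↦ (hA.eigenvalues j : 𝕜)) * Uᴴ)).det := by
        rw [← Matrix.mul_assoc, ← hUA]
    _ = (1 + diagonal (fun j ↦ (hA.eigenvalues j : 𝕜))).det := by
        rw [det_one_add_mul_comm, Matrix.mul_assoc, hU, Matrix.mul_one]
    _ = ∏ i, (1 + (hA.eigenvalues i : 𝕜)) := by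
        rw [← diagonal_one, diagonal_add, det_diagonal]

end Compression

theorem stmt_3_general {𝕜 : Type*} [RCLike 𝕜] {n d : ℕ} (hdn : d ≤ n)
    {A : Matrix (Fin n) (Fin n) 𝕜} (hA : A.IsHermitian)
    {lam : Fin n → ℝ} (hlam : ∃ σ : Equiv.Perm (Fin n), lam = hA.eigenvalues ∘ σ)
    (hdesc : Antitone lam) (hlam_ge : ∀ j, -1 ≤ lam j)
    {V : Matrix (Fin n) (Fin d) 𝕜} (hV : Vᴴ * V = 1) :
    ∃ r : ℝ, (1 + Vᴴ * A * V).det = (r : 𝕜) ∧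
      r ≤ ∏ i : Fin d, (1 + lam (Fin.castLE hdn i)) := by
  obtain ⟨σ, rfl⟩ := hlam
  have hB : (Vᴴ * A * V).IsHermitian := isHermitian_conjTranspose_mul_mul V hA
  obtain ⟨τ, hτ⟩ := exists_perm_antitone_comp hB.eigenvalues
  have hB_ge : ∀ i, -1 ≤ hB.eigenvalues i :=
    le_eigenvalues_compression hA hV hB (σ.forall_congr_right.mp hlam_ge)
  refine ⟨∏ i, (1 + hB.eigenvalues i), ?_, ?_⟩
  · simp [det_one_add_eq_prod_eigenvalues hB]
  · rw [← Equiv.prod_comp τ]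
    refine Finset.prod_le_prod (fun i _ ↦ ?_) fun i _ ↦ ?_
    · linarith [hB_ge (τ i)]
    · exact add_le_add_right (eigenvalues_compression_le_of_antitone hA hV hB hdesc hτ hdn i) 1

/-- Upper-bound direction of Corollary 2: for a Hermitian positive semidefinite
`A : ℂ^{n×n}` with eigenvalues (with multiplicity) enumerated in descending order by
`lam`, and any semi-unitary `V : ℂ^{n×d}` (`Vᴴ V = I_d`, `d ≤ n`), the determinant
`det(I_d + Vᴴ A V)` is a real number and is at most `∏_{i=1}^{d} (1 + lam i)`. -/
theorem stmt_3 (n d : ℕ) (hdn : d ≤ n)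
    (A : Matrix (Fin n) (Fin n) ℂ) (hA : A.PosSemidef)
    (lam : Fin n → ℝ)
    (hlam : ∃ σ : Equiv.Perm (Fin n), lam = hA.1.eigenvalues ∘ σ)
    (hdesc : Antitone lam)
    (V : Matrix (Fin n) (Fin d) ℂ) (hV : Vᴴ * V = 1) :
    ∃ r : ℝ, (1 + Vᴴ * A * V).det = (r : ℂ) ∧
      r ≤ ∏ i : Fin d, (1 + lam (Fin.castLE hdn i)) := by
  obtain ⟨σ, rfl⟩ := hlam
  exact stmt_3_general hdn hA.1 ⟨σ, rfl⟩ hdesc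
    (fun j ↦ neg_one_lt_zero.le.trans (hA.eigenvalues_nonneg (σ j))) hV
end

section
/- Let Σ ∈ ℂ^{n×n} be Hermitian positive definite, let d ≥ K, and let G : ℝ → ℂ^{n×K} and H : ℝ → ℂ^{n×n} be continuous matrix-valued functions on [0, 2π] such that H(ω) is invertible for every ω ∈ [0, 2π]. Let W ∈ ℂ^{d×n} be such that W H(ω) Σ H(ω)^H W^H is invertible for every ω ∈ [0, 2π]. Then (1/(2πK)) ∫₀^{2π} log det(I_d + W H(ω) G(ω) G(ω)^H H(ω)^H W^H (W H(ω) Σ H(ω)^H W^H)^{-1}) dω ≤ (1/(2πK)) ∫₀^{2π} log det(I_K + G(ω)^H Σ^{-1} G(ω)) dω, where both integrands are real-valued (the determinants are positive real numbers). -/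
open Matrix Real
open scoped ComplexOrder

/-!
At each frequency the receiver sees the channel `G` in noise of covariance `S` only through the
filter `A = W H(ω)`, and the rate after filtering is `log det (1 + Gᴴ (Aᴴ (A S Aᴴ)⁻¹ A) G)` by the
Weinstein–Aronszajn identity. The block matrix `[S⁻¹, Aᴴ; A, A S Aᴴ]` has Schur complement
`A S Aᴴ - A S Aᴴ = 0` with respect to its first block, so it is positive semidefinite; hence so is
its other Schur complement `S⁻¹ - Aᴴ (A S Aᴴ)⁻¹ A`. Since `det` is monotone in the Loewner order,
filtering cannot increase the rate at any frequency, and the averages compare accordingly.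
-/

open MeasureTheory
open scoped MatrixOrder

section Determinant

variable {𝕜 n : Type*} [RCLike 𝕜] [Fintype n] [DecidableEq n] {M X Y : Matrix n n 𝕜}

theorem det_one_add_eq_prod_one_add_eigenvalues (hM : M.IsHermitian) :
    (1 + M).det = ∏ i, (1 + (hM.eigenvalues i : 𝕜)) := by
  set U := hM.eigenvectorUnitary
  set D : Matrix n n 𝕜 := diagonal fun i => (hM.eigenvalues i : 𝕜)
  have hU : star (U : Matrix n n 𝕜) * U = 1 := Unitary.coe_star_mul_self U
  have hspec : M = U * (D * star (U : Matrix n n 𝕜)) := by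
    rw [← Matrix.mul_assoc]
    exact hM.spectral_theorem
  calc (1 + M).det = (1 + U * (D * star (U : Matrix n n 𝕜))).det := by rw [← hspec]
    _ = (1 + D).det := by rw [det_one_add_mul_comm, Matrix.mul_assoc, hU, Matrix.mul_one]
    _ = ∏ i, (1 + (hM.eigenvalues i : 𝕜)) := by
      rw [← diagonal_one, diagonal_add, det_diagonal]

theorem one_le_det_one_add (hM : M.PosSemidef) : 1 ≤ (1 + M).det := by
  rw [det_one_add_eq_prod_one_add_eigenvalues hM.isHermitian]
  have hprod : 1 ≤ ∏ i, (1 + hM.isHermitian.eigenvalues i) :=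
    Finset.one_le_prod fun i _ => le_add_of_nonneg_right (hM.eigenvalues_nonneg i)
  exact_mod_cast hprod

theorem det_le_det_of_le_of_posDef (hX : X.PosDef) (hXY : X ≤ Y) : X.det ≤ Y.det := by
  obtain ⟨C, hC⟩ : ∃ C, Y - X = Cᴴ * C :=
    CStarAlgebra.nonneg_iff_eq_star_mul_self.mp (sub_nonneg.mpr hXY)
  have hdetX : IsUnit X.det := (isUnit_iff_isUnit_det X).mp hX.isUnit
  have hone : 1 ≤ (1 + C * X⁻¹ * Cᴴ).det :=
    one_le_det_one_add (hX.inv.posSemidef.mul_mul_conjTranspose_same C)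
  calc X.det ≤ X.det * (1 + C * X⁻¹ * Cᴴ).det := le_mul_of_one_le_right hX.det_pos.le hone
    _ = (X + Cᴴ * C).det := (det_add_mul Cᴴ C hdetX).symm
    _ = Y.det := by rw [← hC, add_sub_cancel]

theorem det_le_det_of_le (hX : X.PosSemidef) (hXY : X ≤ Y) : X.det ≤ Y.det := by
  by_cases hdet : X.det = 0
  · rw [hdet]
    exact (hX.nonneg.trans hXY).posSemidef.det_nonneg
  · exact det_le_det_of_le_of_posDef (hX.posDef_iff_det_ne_zero.mpr hdet) hXY

end Determinant

section LogDetRate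

variable {𝕜 n k d : Type*} [RCLike 𝕜] [Fintype n] [DecidableEq n] [Fintype k] [DecidableEq k]
  [Fintype d] [DecidableEq d] {S : Matrix n n 𝕜}

theorem conjTranspose_mul_inv_mul_le_inv (hS : S.PosDef) {A : Matrix d n 𝕜}
    (hA : IsUnit (A * S * Aᴴ)) : Aᴴ * (A * S * Aᴴ)⁻¹ * A ≤ S⁻¹ := by
  have hP : (A * S * Aᴴ).PosDef :=
    (hS.posSemidef.mul_mul_conjTranspose_same A).posDef_iff_isUnit.mpr hA
  let := hS.inv.isUnit.invertible
  let := hP.isUnit.invertible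
  have hblock : (fromBlocks S⁻¹ Aᴴ Aᴴᴴ (A * S * Aᴴ)).PosSemidef := by
    rw [hS.inv.fromBlocks₁₁, conjTranspose_conjTranspose,
      nonsing_inv_nonsing_inv S ((isUnit_iff_isUnit_det S).mp hS.isUnit), sub_self]
    exact PosSemidef.zero
  rwa [hP.fromBlocks₂₂, conjTranspose_conjTranspose] at hblock

/-- The Gaussian rate `log det (I + Gᴴ S⁻¹ G)` of the channel `G` in noise of covariance `S`. The
determinant is a positive real number when `S` is positive definite, and is read off through its
real part; for singular `S` the convention `S⁻¹ = 0` makes the rate `0`. -/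
noncomputable def logDetRate (S : Matrix n n 𝕜) (G : Matrix n k 𝕜) : ℝ :=
  Real.log (RCLike.re (1 + Gᴴ * S⁻¹ * G).det)

theorem one_le_det_one_add_conjTranspose_mul_inv_mul (hS : S.PosSemidef) (G : Matrix n k 𝕜) :
    1 ≤ (1 + Gᴴ * S⁻¹ * G).det :=
  one_le_det_one_add (hS.inv.conjTranspose_mul_mul_same G)

theorem det_one_add_conjTranspose_mul_inv_mul_pos (hS : S.PosSemidef) (G : Matrix n k 𝕜) :
    0 < (1 + Gᴴ * S⁻¹ * G).det :=
  one_pos.trans_le (one_le_det_one_add_conjTranspose_mul_inv_mul hS G)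

theorem det_one_add_filter_le (hS : S.PosDef) {A : Matrix d n 𝕜} (hA : IsUnit (A * S * Aᴴ))
    (G : Matrix n k 𝕜) :
    (1 + (A * G)ᴴ * (A * S * Aᴴ)⁻¹ * (A * G)).det ≤ (1 + Gᴴ * S⁻¹ * G).det := by
  have hP : (A * S * Aᴴ).PosSemidef := hS.posSemidef.mul_mul_conjTranspose_same A
  have hgram : (A * G)ᴴ * (A * S * Aᴴ)⁻¹ * (A * G) ≤ Gᴴ * S⁻¹ * G := by
    have hdiff : (Gᴴ * (S⁻¹ - Aᴴ * (A * S * Aᴴ)⁻¹ * A) * G).PosSemidef :=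
      (conjTranspose_mul_inv_mul_le_inv hS hA).conjTranspose_mul_mul_same G
    rw [Matrix.le_iff]
    simpa only [Matrix.mul_sub, Matrix.sub_mul, conjTranspose_mul, Matrix.mul_assoc] using hdiff
  exact det_le_det_of_le
    (PosSemidef.one.add (hP.inv.conjTranspose_mul_mul_same (A * G))) (add_le_add_right hgram 1)

theorem logDetRate_nonneg (hS : S.PosSemidef) (G : Matrix n k 𝕜) : 0 ≤ logDetRate S G := by
  have hone := (RCLike.le_iff_re_im.mp (one_le_det_one_add_conjTranspose_mul_inv_mul hS G)).1
  exact Real.log_nonneg (by rwa [RCLike.one_re] at hone)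

theorem logDetRate_filter_le (hS : S.PosDef) {A : Matrix d n 𝕜} (hA : IsUnit (A * S * Aᴴ))
    (G : Matrix n k 𝕜) : logDetRate (A * S * Aᴴ) (A * G) ≤ logDetRate S G := by
  have hpos : 0 < (1 + (A * G)ᴴ * (A * S * Aᴴ)⁻¹ * (A * G)).det :=
    det_one_add_conjTranspose_mul_inv_mul_pos (hS.posSemidef.mul_mul_conjTranspose_same A) (A * G)
  exact Real.log_le_log (RCLike.pos_iff.mp hpos).1
    (RCLike.le_iff_re_im.mp (det_one_add_filter_le hS hA G)).1

theorem continuous_logDetRate (hS : S.PosSemidef) :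
    Continuous fun G : Matrix n k 𝕜 => logDetRate S G := by
  have hdet : Continuous fun G : Matrix n k 𝕜 => RCLike.re (1 + Gᴴ * S⁻¹ * G).det := by fun_prop
  exact hdet.log fun G =>
    (RCLike.pos_iff.mp (det_one_add_conjTranspose_mul_inv_mul_pos hS G)).1.ne'

end LogDetRate

section Integration

instance pseudoMetrizableSpace_matrix {m n α : Type*} [Finite m] [Finite n]
    [TopologicalSpace α] [TopologicalSpace.PseudoMetrizableSpace α] :
    TopologicalSpace.PseudoMetrizableSpace (Matrix m n α) :=
  inferInstanceAs (TopologicalSpace.PseudoMetrizableSpace (m → n → α))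

variable {𝕜 n k d Ω : Type*} [RCLike 𝕜] [Fintype n] [DecidableEq n] [Fintype k] [DecidableEq k]
  [Fintype d] [DecidableEq d] [MeasurableSpace Ω] {μ : Measure Ω}

theorem aestronglyMeasurable_matrix_inv {P : Ω → Matrix n n 𝕜} (hP : AEStronglyMeasurable P μ) :
    AEStronglyMeasurable (fun ω => (P ω)⁻¹) μ := by
  have hdet : AEStronglyMeasurable (fun ω => (P ω).det) μ :=
    continuous_id.matrix_det.comp_aestronglyMeasurable hP
  have hadj : AEStronglyMeasurable (fun ω => (P ω).adjugate) μ :=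
    continuous_id.matrix_adjugate.comp_aestronglyMeasurable hP
  simp only [inv_def, Ring.inverse_eq_inv']
  exact hdet.inv₀.smul hadj

theorem aestronglyMeasurable_logDetRate {P : Ω → Matrix n n 𝕜} {G : Ω → Matrix n k 𝕜}
    (hP : AEStronglyMeasurable P μ) (hG : AEStronglyMeasurable G μ) :
    AEStronglyMeasurable (fun ω => logDetRate (P ω) (G ω)) μ := by
  have hcont : Continuous fun p : Matrix n n 𝕜 × Matrix n k 𝕜 =>
      RCLike.re (1 + p.2ᴴ * p.1 * p.2).det := by fun_prop
  have hre := hcont.comp_aestronglyMeasurable ((aestronglyMeasurable_matrix_inv hP).prodMk hG)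
  exact (Real.measurable_log.comp_aemeasurable hre.aemeasurable).aestronglyMeasurable

variable {S : Matrix n n 𝕜} {A : Ω → Matrix d n 𝕜} {G : Ω → Matrix n k 𝕜}

theorem integrable_logDetRate_filter (hS : S.PosDef)
    (hA : AEStronglyMeasurable A μ) (hG : AEStronglyMeasurable G μ)
    (hunit : ∀ᵐ ω ∂μ, IsUnit (A ω * S * (A ω)ᴴ))
    (hint : Integrable (fun ω => logDetRate S (G ω)) μ) :
    Integrable (fun ω => logDetRate (A ω * S * (A ω)ᴴ) (A ω * G ω)) μ := by
  have hnoise : Continuous fun B : Matrix d n 𝕜 => B * S * Bᴴ := by fun_prop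
  have hchannel : Continuous fun p : Matrix d n 𝕜 × Matrix n k 𝕜 => p.1 * p.2 := by fun_prop
  refine hint.mono' (aestronglyMeasurable_logDetRate (hnoise.comp_aestronglyMeasurable hA)
    (hchannel.comp_aestronglyMeasurable (hA.prodMk hG))) ?_
  filter_upwards [hunit] with ω hω
  rw [Real.norm_of_nonneg
    (logDetRate_nonneg (hS.posSemidef.mul_mul_conjTranspose_same (A ω)) _)]
  exact logDetRate_filter_le hS hω (G ω)

end Integration

theorem det_one_add_filter_comm {R n m k d : Type*} [CommRing R] [StarRing R] [Fintype n]
    [Fintype m] [Fintype k] [DecidableEq k] [Fintype d] [DecidableEq d] (W : Matrix d m R)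
    (H : Matrix m n R) (S : Matrix n n R) (G : Matrix n k R) :
    (1 + W * H * G * Gᴴ * Hᴴ * Wᴴ * (W * H * S * Hᴴ * Wᴴ)⁻¹).det =
      (1 + (W * H * G)ᴴ * (W * H * S * (W * H)ᴴ)⁻¹ * (W * H * G)).det := by
  have hsignal : W * H * G * Gᴴ * Hᴴ * Wᴴ = W * H * G * (W * H * G)ᴴ := by
    simp only [conjTranspose_mul, Matrix.mul_assoc]
  have hnoise : W * H * S * Hᴴ * Wᴴ = W * H * S * (W * H)ᴴ := by
    simp only [conjTranspose_mul, Matrix.mul_assoc]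
  rw [hsignal, hnoise, Matrix.mul_assoc, det_one_add_mul_comm]

theorem stmt_16_general {𝕜 n m k d : Type*} [RCLike 𝕜] [Fintype n] [DecidableEq n] [Fintype m]
    [Fintype k] [DecidableEq k] [Fintype d] [DecidableEq d] {S : Matrix n n 𝕜} (hS : S.PosDef)
    {G : ℝ → Matrix n k 𝕜} {H : ℝ → Matrix m n 𝕜} {W : Matrix d m 𝕜}
    (hG : AEStronglyMeasurable G (volume.restrict (Set.Icc 0 (2 * π))))
    (hH : AEStronglyMeasurable H (volume.restrict (Set.Icc 0 (2 * π))))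
    (hW : ∀ ω ∈ Set.Icc (0 : ℝ) (2 * π), IsUnit (W * H ω * S * (H ω)ᴴ * Wᴴ))
    (hlimit : IntegrableOn (fun ω => Real.log (RCLike.re (1 + (G ω)ᴴ * S⁻¹ * G ω).det))
      (Set.Icc 0 (2 * π))) :
    (∀ ω ∈ Set.Icc (0 : ℝ) (2 * π),
      (0 < RCLike.re (1 + W * H ω * G ω * (G ω)ᴴ * (H ω)ᴴ * Wᴴ *
          (W * H ω * S * (H ω)ᴴ * Wᴴ)⁻¹).det ∧
        RCLike.im (1 + W * H ω * G ω * (G ω)ᴴ * (H ω)ᴴ * Wᴴ *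
          (W * H ω * S * (H ω)ᴴ * Wᴴ)⁻¹).det = 0) ∧
      (0 < RCLike.re (1 + (G ω)ᴴ * S⁻¹ * G ω).det ∧
        RCLike.im (1 + (G ω)ᴴ * S⁻¹ * G ω).det = 0)) ∧
    IntegrableOn (fun ω => Real.log (RCLike.re (1 + W * H ω * G ω * (G ω)ᴴ * (H ω)ᴴ * Wᴴ *
      (W * H ω * S * (H ω)ᴴ * Wᴴ)⁻¹).det)) (Set.Icc 0 (2 * π)) ∧
    (1 / (2 * π * Fintype.card k)) * ∫ ω in (0 : ℝ)..(2 * π),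
        Real.log (RCLike.re (1 + W * H ω * G ω * (G ω)ᴴ * (H ω)ᴴ * Wᴴ *
          (W * H ω * S * (H ω)ᴴ * Wᴴ)⁻¹).det) ≤
      (1 / (2 * π * Fintype.card k)) * ∫ ω in (0 : ℝ)..(2 * π),
        Real.log (RCLike.re (1 + (G ω)ᴴ * S⁻¹ * G ω).det) := by
  have hband : (0 : ℝ) ≤ 2 * π := by positivity
  have hunit : ∀ ω ∈ Set.Icc (0 : ℝ) (2 * π), IsUnit (W * H ω * S * (W * H ω)ᴴ) := fun ω hω => by
    simpa only [conjTranspose_mul, Matrix.mul_assoc] using hW ω hω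
  have hWH : AEStronglyMeasurable (fun ω => W * H ω) (volume.restrict (Set.Icc 0 (2 * π))) :=
    (continuous_const.matrix_mul continuous_id).comp_aestronglyMeasurable hH
  have hfiltered : IntegrableOn
      (fun ω => logDetRate (W * H ω * S * (W * H ω)ᴴ) (W * H ω * G ω)) (Set.Icc 0 (2 * π)) :=
    integrable_logDetRate_filter hS hWH hG
      (ae_restrict_of_forall_mem measurableSet_Icc hunit) hlimit
  simp only [det_one_add_filter_comm]
  refine ⟨fun ω _ => ⟨RCLike.pos_iff.mp ?_, RCLike.pos_iff.mp ?_⟩, hfiltered,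
    mul_le_mul_of_nonneg_left ?_ (by positivity)⟩
  · exact det_one_add_conjTranspose_mul_inv_mul_pos
      (hS.posSemidef.mul_mul_conjTranspose_same (W * H ω)) (W * H ω * G ω)
  · exact det_one_add_conjTranspose_mul_inv_mul_pos hS.posSemidef (G ω)
  · exact intervalIntegral.integral_mono_on hband
      ((intervalIntegrable_iff_integrableOn_Icc_of_le hband).mpr hfiltered)
      ((intervalIntegrable_iff_integrableOn_Icc_of_le hband).mpr hlimit)
      fun ω hω => logDetRate_filter_le hS (hunit ω hω) (G ω)

/-- Proposition 1 of the paper in the regime `d ≥ K`: for noise covariance `Σ ≻ 0`,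
continuous channel response `G(ω) ∈ ℂ^{n×K}` and invertible metasurface response
`H(ω) ∈ ℂ^{n×n}` on `[0, 2π]`, and a fixed weights matrix `W ∈ ℂ^{d×n}` with
`W H(ω) Σ H(ω)ᴴ Wᴴ` invertible for all `ω`, both determinant integrands are positive
real numbers and the achievable average sum-rate is bounded by the fundamental limit:
`(1/(2πK)) ∫₀^{2π} log det(I_d + W H G Gᴴ Hᴴ Wᴴ (W H Σ Hᴴ Wᴴ)⁻¹) dω ≤
 (1/(2πK)) ∫₀^{2π} log det(I_K + Gᴴ Σ⁻¹ G) dω`. -/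
theorem stmt_16 (n K d : ℕ) (hdK : K ≤ d)
    (S : Matrix (Fin n) (Fin n) ℂ) (hS : S.PosDef)
    (G : ℝ → Matrix (Fin n) (Fin K) ℂ) (H : ℝ → Matrix (Fin n) (Fin n) ℂ)
    (hGcont : ContinuousOn G (Set.Icc 0 (2 * π)))
    (hHcont : ContinuousOn H (Set.Icc 0 (2 * π)))
    (hHinv : ∀ ω ∈ Set.Icc (0 : ℝ) (2 * π), IsUnit (H ω))
    (W : Matrix (Fin d) (Fin n) ℂ)
    (hWinv : ∀ ω ∈ Set.Icc (0 : ℝ) (2 * π), IsUnit (W * H ω * S * (H ω)ᴴ * Wᴴ)) :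
    (∀ ω ∈ Set.Icc (0 : ℝ) (2 * π),
      ((0 < (1 + W * H ω * G ω * (G ω)ᴴ * (H ω)ᴴ * Wᴴ *
          (W * H ω * S * (H ω)ᴴ * Wᴴ)⁻¹).det.re ∧
        (1 + W * H ω * G ω * (G ω)ᴴ * (H ω)ᴴ * Wᴴ *
          (W * H ω * S * (H ω)ᴴ * Wᴴ)⁻¹).det.im = 0)) ∧
      (0 < (1 + (G ω)ᴴ * S⁻¹ * G ω).det.re ∧ (1 + (G ω)ᴴ * S⁻¹ * G ω).det.im = 0)) ∧
    (1 / (2 * π * K)) * ∫ ω in (0:ℝ)..(2 * π),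
        Real.log ((1 + W * H ω * G ω * (G ω)ᴴ * (H ω)ᴴ * Wᴴ *
          (W * H ω * S * (H ω)ᴴ * Wᴴ)⁻¹).det.re) ≤
      (1 / (2 * π * K)) * ∫ ω in (0:ℝ)..(2 * π),
        Real.log ((1 + (G ω)ᴴ * S⁻¹ * G ω).det.re) := by
  have h := stmt_16_general hS (hGcont.aestronglyMeasurable measurableSet_Icc)
    (hHcont.aestronglyMeasurable measurableSet_Icc) hWinv
    ((continuous_logDetRate hS.posSemidef).comp_continuousOn hGcont).integrableOn_Icc
  rw [Fintype.card_fin] at h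
  exact ⟨h.1, h.2.2⟩
end
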